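/- arXiv:0808.4125 — 7 statements merged into one kernel-verified Lean document; each statement's English description precedes it below -/
import Mathlib

section
/- Let V be a finite-dimensional real vector space and let ⟨(x,α),(y,β)⟩ := α(y) + β(x) be the canonical pairing on V ⊕ V*. Fix λ ∈ ℝ. An endomorphism J of V ⊕ V* satisfies ⟨Ju,v⟩ + ⟨u,Jv⟩ = 0 for all u,v ∈ V ⊕ V* together with J² = λ·id if and only if there exist linear maps N : V → V, π : V* → V and σ : V → V* with π skew-symmetric (α(πβ) = −β(πα) for all α,β ∈ V*) and σ skew-symmetric (σ(x)(y) = −σ(y)(x) for all x,y ∈ V) such that J(x,α) = (Nx + πα, σx − tNα) for all x ∈ V, α ∈ V* (where (tNα)(x) = α(Nx)), and moreover N ∘ π = π ∘ tN, σ ∘ N = tN ∘ σ, and N² + π ∘ σ = λ·id_V. -/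
/-- On `V ⊕ V*` with the canonical pairing
`⟨(x,α),(y,β)⟩ = α y + β x`, an endomorphism `J` is orthogonal
(`⟨Ju,v⟩ + ⟨u,Jv⟩ = 0`) and satisfies `J² = λ·id` iff it has the matrix form
`J(x,α) = (Nx + πα, σx − ᵗNα)` with `π`, `σ` skew-symmetric and
`N∘π = π∘ᵗN`, `σ∘N = ᵗN∘σ`, `N² + π∘σ = λ·id`. -/
theorem almost_cps_matrix_characterization
    {V : Type*} [AddCommGroup V] [Module ℝ V] [FiniteDimensional ℝ V]
    (lam : ℝ)
    (J : (V × Module.Dual ℝ V) →ₗ[ℝ] (V × Module.Dual ℝ V)) :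
    ((∀ u v : V × Module.Dual ℝ V,
        ((J u).2 v.1 + v.2 (J u).1) + (u.2 (J v).1 + (J v).2 u.1) = 0) ∧
      J ∘ₗ J = lam • LinearMap.id) ↔
    ∃ (N : V →ₗ[ℝ] V) (π : Module.Dual ℝ V →ₗ[ℝ] V)
        (σ : V →ₗ[ℝ] Module.Dual ℝ V),
      (∀ α β : Module.Dual ℝ V, α (π β) = -β (π α)) ∧
      (∀ x y : V, σ x y = -σ y x) ∧
      (∀ (x : V) (α : Module.Dual ℝ V),
        J (x, α) = (N x + π α, σ x - N.dualMap α)) ∧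
      N ∘ₗ π = π ∘ₗ N.dualMap ∧
      σ ∘ₗ N = N.dualMap ∘ₗ σ ∧
      N ∘ₗ N + π ∘ₗ σ = lam • LinearMap.id := by
  constructor
  · rintro ⟨h, hJ⟩
    have key : ∀ (x : V) (α : Module.Dual ℝ V),
        J (x, α) = ((J (x, 0)).1 + (J (0, α)).1,
          (J (x, 0)).2 - (LinearMap.fst ℝ V (Module.Dual ℝ V) ∘ₗ J ∘ₗ
            LinearMap.inl ℝ V (Module.Dual ℝ V)).dualMap α) := by
      intro x α
      have e : J (x, α) = J (x, 0) + J (0, α) := by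
        rw [← map_add]; simp
      rw [e]
      refine Prod.ext rfl ?_
      ext y
      have := h (0, α) (y, 0)
      simp at this
      simp
      linarith
    have hsq : ∀ u, J (J u) = lam • u := fun u => by
      simpa using LinearMap.congr_fun hJ u
    obtain ⟨N, hN⟩ : ∃ N : V →ₗ[ℝ] V, N = LinearMap.fst ℝ V (Module.Dual ℝ V) ∘ₗ J ∘ₗ
            LinearMap.inl ℝ V (Module.Dual ℝ V) := ⟨_, rfl⟩
    obtain ⟨P, hP⟩ : ∃ P : Module.Dual ℝ V →ₗ[ℝ] V,
        P = LinearMap.fst ℝ V (Module.Dual ℝ V) ∘ₗ J ∘ₗ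
            LinearMap.inr ℝ V (Module.Dual ℝ V) := ⟨_, rfl⟩
    obtain ⟨S, hS⟩ : ∃ S : V →ₗ[ℝ] Module.Dual ℝ V,
        S = LinearMap.snd ℝ V (Module.Dual ℝ V) ∘ₗ J ∘ₗ
            LinearMap.inl ℝ V (Module.Dual ℝ V) := ⟨_, rfl⟩
    have key' : ∀ (x : V) (α : Module.Dual ℝ V),
        J (x, α) = (N x + P α, S x - N.dualMap α) := by
      intro x α
      rw [key, hN, hP, hS]; rfl
    clear key hN hP hS
    have h1 : ∀ x, (N (N x) + P (S x), S (N x) - N.dualMap (S x)) =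
        (lam • x, (0 : Module.Dual ℝ V)) := by
      intro x
      have := hsq (x, 0)
      simpa only [key', map_zero, add_zero, sub_zero, Prod.smul_mk, smul_zero] using this
    have h2 : ∀ α, N (P α) - P (N.dualMap α) = 0 := by
      intro α
      have := congrArg Prod.fst (hsq (0, α))
      simpa only [key', map_zero, zero_add, zero_sub, Prod.smul_mk, smul_zero, map_neg,
        ← sub_eq_add_neg] using this
    refine ⟨N, P, S, ?_, ?_, key', ?_, ?_, ?_⟩
    · intro α β
      have := h (0, α) (0, β)
      simp [key'] at this
      linarith
    · intro x y
      have := h (x, 0) (y, 0)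
      simp [key'] at this
      linarith
    · ext1 α
      exact sub_eq_zero.1 (h2 α)
    · refine LinearMap.ext fun x => ?_
      exact sub_eq_zero.1 (congrArg Prod.snd (h1 x))
    · ext1 x
      exact congrArg Prod.fst (h1 x)
  · rintro ⟨N, P, S, hP, hS, hJ, h1, h2, h3⟩
    have h1' : ∀ α, N (P α) = P (N.dualMap α) := fun α => LinearMap.congr_fun h1 α
    have h2' : ∀ x, S (N x) = N.dualMap (S x) := fun x => LinearMap.congr_fun h2 x
    have h3' : ∀ x, N (N x) + P (S x) = lam • x := fun x => LinearMap.congr_fun h3 x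
    constructor
    · rintro ⟨x, α⟩ ⟨y, β⟩
      have a := hP α β
      have b := hS x y
      simp only [hJ, LinearMap.sub_apply, map_add, LinearMap.dualMap_apply]
      linarith
    · apply LinearMap.ext
      rintro ⟨x, α⟩
      change J (J (x, α)) = lam • (x, α)
      rw [hJ, hJ]
      refine Prod.ext ?_ ?_
      · change N (N x + P α) + P (S x - N.dualMap α) = lam • x
        rw [← h3', map_add, map_sub, h1']
        abel
      · change S (N x + P α) - N.dualMap (S x - N.dualMap α) = lam • α
        rw [map_add, map_sub, h2']
        ext y
        have a := hS (P α) y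
        have b := hP (S y) α
        have c := congrArg α (h3' y)
        simp only [map_add, map_smul] at c
        simp only [LinearMap.sub_apply, LinearMap.add_apply, LinearMap.dualMap_apply,
          LinearMap.smul_apply]
        linarith
end

section
/- Let (π, N, ψ, H) be a Poisson quasi-Nijenhuis structure with background on a finite-dimensional real Lie algebra g. Then: (a) the bracket [·,·]_π satisfies the Jacobi identity on g* (so (g*, [·,·]_π) is a Lie algebra); and (b) if δ denotes the unique degree-one derivation of the exterior algebra Λ•g* that vanishes on scalars and satisfies δα = d_N α − H(πα, ·, ·) for every α ∈ g*, then δ(ψ + i_N H) = 0. -/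
namespace PqN

variable {g : Type*} [LieRing g] [LieAlgebra ℝ g]

noncomputable def adStar (x : g) (α : Module.Dual ℝ g) : Module.Dual ℝ g :=
  -(α ∘ₗ (LieAlgebra.ad ℝ g x : g →ₗ[ℝ] g))

noncomputable def brPi (π : Module.Dual ℝ g →ₗ[ℝ] g) (α β : Module.Dual ℝ g) :
    Module.Dual ℝ g :=
  adStar (π α) β - adStar (π β) α

def brN (N : g →ₗ[ℝ] g) (x y : g) : g := ⁅N x, y⁆ + ⁅x, N y⁆ - N ⁅x, y⁆

def torN (N : g →ₗ[ℝ] g) (x y : g) : g := ⁅N x, N y⁆ - N (brN N x y)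

noncomputable def brNmap (N : g →ₗ[ℝ] g) (x : g) : g →ₗ[ℝ] g :=
  (LieAlgebra.ad ℝ g (N x) : g →ₗ[ℝ] g) + (LieAlgebra.ad ℝ g x : g →ₗ[ℝ] g) ∘ₗ N
    - N ∘ₗ (LieAlgebra.ad ℝ g x : g →ₗ[ℝ] g)

noncomputable def brNPi (π : Module.Dual ℝ g →ₗ[ℝ] g) (N : g →ₗ[ℝ] g)
    (α β : Module.Dual ℝ g) : Module.Dual ℝ g :=
  -(β ∘ₗ brNmap N (π α)) + α ∘ₗ brNmap N (π β)

noncomputable def conc (π : Module.Dual ℝ g →ₗ[ℝ] g) (N : g →ₗ[ℝ] g)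
    (α β : Module.Dual ℝ g) : Module.Dual ℝ g :=
  brNPi π N α β - brPi π (N.dualMap α) β - brPi π α (N.dualMap β) + N.dualMap (brPi π α β)

def lie (x y : g) : g := ⁅x, y⁆

def dTwo (br : g → g → g) (ω : g → g → ℝ) (x y z : g) : ℝ :=
  -ω (br x y) z + ω (br x z) y - ω (br y z) x

def dThree (br : g → g → g) (φ : g → g → g → ℝ) (x₀ x₁ x₂ x₃ : g) : ℝ :=
  -φ (br x₀ x₁) x₂ x₃ + φ (br x₀ x₂) x₁ x₃ - φ (br x₀ x₃) x₁ x₂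
    - φ (br x₁ x₂) x₀ x₃ + φ (br x₁ x₃) x₀ x₂ - φ (br x₂ x₃) x₀ x₁

def calH (N : g →ₗ[ℝ] g) (H : g → g → g → ℝ) (x y z : g) : ℝ :=
  H (N x) (N y) z + H (N y) (N z) x + H (N z) (N x) y

def iN2 (N : g →ₗ[ℝ] g) (τ : g → g → ℝ) (x y : g) : ℝ := τ (N x) y + τ x (N y)

def iN3 (N : g →ₗ[ℝ] g) (η : g → g → g → ℝ) (x y z : g) : ℝ :=
  η (N x) y z + η x (N y) z + η x y (N z)

structure IsAlt3 (H : g → g → g → ℝ) : Prop where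
  lin1 : ∀ y z, IsLinearMap ℝ fun x => H x y z
  lin2 : ∀ x z, IsLinearMap ℝ fun y => H x y z
  lin3 : ∀ x y, IsLinearMap ℝ fun z => H x y z
  alt12 : ∀ x y z, H x y z = -H y x z
  alt23 : ∀ x y z, H x y z = -H x z y

noncomputable def dual3 (H : g → g → g → ℝ) (hH : IsAlt3 H) (x y : g) :
    Module.Dual ℝ g :=
  IsLinearMap.mk' (fun z => H x y z) (hH.lin3 x y)

structure IsPQNwB (π : Module.Dual ℝ g →ₗ[ℝ] g) (N : g →ₗ[ℝ] g)
    (ψ H : g → g → g → ℝ) : Prop where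
  skew : ∀ α β : Module.Dual ℝ g, α (π β) = -β (π α)
  poisson : ∀ α β γ : Module.Dual ℝ g,
    α ⁅π β, π γ⁆ + β ⁅π γ, π α⁆ + γ ⁅π α, π β⁆ = 0
  compat : N ∘ₗ π = π ∘ₗ N.dualMap
  alt_psi : IsAlt3 ψ
  alt_H : IsAlt3 H
  closed_psi : ∀ x y z w, dThree lie ψ x y z w = 0
  closed_H : ∀ x y z w, dThree lie H x y z w = 0
  conc_eq : ∀ α β z, conc π N α β z = 2 * H (π α) (π β) z
  torsion : ∀ x y, torN N x y =
    π (dual3 H alt_H (N x) y - dual3 H alt_H (N y) x + dual3 ψ alt_psi x y)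
  dN_psi : ∀ x y z w, dThree (brN N) ψ x y z w = dThree lie (calH N H) x y z w

def pr (u v : g × Module.Dual ℝ g) : ℝ := u.2 v.1 + v.2 u.1

noncomputable def dorf (H : g → g → g → ℝ) (hH : IsAlt3 H)
    (u v : g × Module.Dual ℝ g) : g × Module.Dual ℝ g :=
  (⁅u.1, v.1⁆, adStar u.1 v.2 - adStar v.1 u.2 + dual3 H hH u.1 v.1)

noncomputable def torJ (H : g → g → g → ℝ) (hH : IsAlt3 H)
    (J : g × Module.Dual ℝ g → g × Module.Dual ℝ g) (u v : g × Module.Dual ℝ g) :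
    g × Module.Dual ℝ g :=
  dorf H hH (J u) (J v) - J (dorf H hH (J u) v + dorf H hH u (J v) - J (dorf H hH u v))

noncomputable def dTwoDual (τ : g →ₗ[ℝ] Module.Dual ℝ g) (x y : g) : Module.Dual ℝ g :=
  -(τ ⁅x, y⁆) + (LinearMap.applyₗ y) ∘ₗ (τ ∘ₗ (LieAlgebra.ad ℝ g x : g →ₗ[ℝ] g))
    - (LinearMap.applyₗ x) ∘ₗ (τ ∘ₗ (LieAlgebra.ad ℝ g y : g →ₗ[ℝ] g))

theorem IsAlt3.cyc {F : g → g → g → ℝ} (hF : IsAlt3 F) (a b c : g) : F a b c = F b c a := by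
  rw [hF.alt12 a b c, hF.alt23 b a c, neg_neg]

theorem IsAlt3.add1 {F : g → g → g → ℝ} (hF : IsAlt3 F) (a b c d : g) :
    F (a + b) c d = F a c d + F b c d := (hF.lin1 c d).map_add a b

theorem IsAlt3.sub1 {F : g → g → g → ℝ} (hF : IsAlt3 F) (a b c d : g) :
    F (a - b) c d = F a c d - F b c d := (hF.lin1 c d).map_sub a b

theorem pairing {π : Module.Dual ℝ g →ₗ[ℝ] g}
    (skew : ∀ α β : Module.Dual ℝ g, α (π β) = -β (π α))
    {F G : g → g → g → ℝ} (hF : IsAlt3 F) (hG : IsAlt3 G) (a b c d : g) :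
    F (π (dual3 G hG a b)) c d = -G (π (dual3 F hF c d)) a b := by
  have h := skew (dual3 F hF c d) (dual3 G hG a b)
  simp only [dual3, IsLinearMap.mk'_apply] at h
  rw [hF.cyc, hG.cyc]
  exact h

theorem pairingN {π : Module.Dual ℝ g →ₗ[ℝ] g} {N : g →ₗ[ℝ] g}
    (skew : ∀ α β : Module.Dual ℝ g, α (π β) = -β (π α))
    (compat : N ∘ₗ π = π ∘ₗ N.dualMap)
    {F : g → g → g → ℝ} (hF : IsAlt3 F) (a b c d : g) :
    F (N (π (dual3 F hF a b))) c d = F (N (π (dual3 F hF c d))) a b * (-1) := by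
  have h := skew (dual3 F hF c d) (N.dualMap (dual3 F hF a b))
  have e := LinearMap.congr_fun compat (dual3 F hF a b)
  simp only [LinearMap.comp_apply] at e
  rw [← e] at h
  simp only [dual3, LinearMap.dualMap_apply, IsLinearMap.mk'_apply] at h
  rw [hF.cyc, hF.cyc (N (π (dual3 F hF c d)))]
  simp only [dual3]
  linarith

theorem calH_eq {F : g → g → g → ℝ} (hF : IsAlt3 F) (N : g →ₗ[ℝ] g) (x y z : g) :
    calH N F x y z = F (N x) (N y) z + F x (N y) (N z) + F (N x) y (N z) := by
  unfold calH
  linarith [hF.cyc (N z) (N x) y, hF.alt23 (N x) y (N z), hF.cyc (N z) (N x) y,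
    hF.alt23 (N x) (N z) y, hF.cyc x (N y) (N z), hF.alt12 (N z) (N x) y]

theorem pi_brPi {π : Module.Dual ℝ g →ₗ[ℝ] g}
    (skew : ∀ α β : Module.Dual ℝ g, α (π β) = -β (π α))
    (poisson : ∀ α β γ : Module.Dual ℝ g,
      α ⁅π β, π γ⁆ + β ⁅π γ, π α⁆ + γ ⁅π α, π β⁆ = 0) (α β : Module.Dual ℝ g) :
    π (brPi π α β) = ⁅π α, π β⁆ := by
  rw [← sub_eq_zero, ← Module.forall_dual_apply_eq_zero_iff ℝ]
  intro γ
  rw [map_sub, skew]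
  have h := poisson α β γ
  rw [← lie_skew (π γ) (π α), map_neg] at h
  simp only [brPi, adStar, LinearMap.sub_apply, LinearMap.neg_apply, LinearMap.comp_apply,
    LieAlgebra.ad_apply]
  linarith [h]

/-- `N [x,y]_N` expressed through the torsion condition. -/
theorem H_torsion {π : Module.Dual ℝ g →ₗ[ℝ] g} {N : g →ₗ[ℝ] g} {ψ H : g → g → g → ℝ}
    (hs : IsPQNwB π N ψ H) (x y z w : g) :
    H (N (brN N x y)) z w = H ⁅N x, N y⁆ z w + H (π (dual3 H hs.alt_H z w)) (N x) y
      + H (π (dual3 H hs.alt_H z w)) x (N y) + ψ (π (dual3 H hs.alt_H z w)) x y := by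
  have h := hs.torsion x y
  have e : N (brN N x y) = ⁅N x, N y⁆ -
      (π (dual3 H hs.alt_H (N x) y) - π (dual3 H hs.alt_H (N y) x)
        + π (dual3 ψ hs.alt_psi x y)) := by
    rw [← map_sub, ← map_add, ← h, torN]; abel
  rw [e, hs.alt_H.sub1, hs.alt_H.add1, hs.alt_H.sub1,
    pairing hs.skew hs.alt_H hs.alt_H (N x) y, pairing hs.skew hs.alt_H hs.alt_H (N y) x,
    pairing hs.skew hs.alt_H hs.alt_psi x y,
    hs.alt_H.alt23 (π (dual3 H hs.alt_H z w)) (N y) x]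
  ring

/-- The contribution of a single bracket to `δ (ψ + i_N H)`. -/
theorem term_eq {π : Module.Dual ℝ g →ₗ[ℝ] g} {N : g →ₗ[ℝ] g} {ψ H : g → g → g → ℝ}
    (hs : IsPQNwB π N ψ H) (x y z w : g) :
    ψ (brN N x y - π (dual3 H hs.alt_H x y)) z w
        + iN3 N H (brN N x y - π (dual3 H hs.alt_H x y)) z w
      = ψ (brN N x y) z w - calH N H ⁅x, y⁆ z w
        + (H ⁅N x, N y⁆ z w + H ⁅N x, y⁆ (N z) w + H ⁅N x, y⁆ z (N w)
          + H ⁅x, N y⁆ (N z) w + H ⁅x, N y⁆ z (N w) + H ⁅x, y⁆ (N z) (N w))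
        + (H (π (dual3 H hs.alt_H z w)) (N x) y + H (π (dual3 H hs.alt_H z w)) x (N y)
          + ψ (π (dual3 H hs.alt_H z w)) x y)
        - (H (π (dual3 H hs.alt_H x y)) (N z) w + H (π (dual3 H hs.alt_H x y)) z (N w)
          + ψ (π (dual3 H hs.alt_H x y)) z w)
        - H (N (π (dual3 H hs.alt_H x y))) z w := by
  rw [calH_eq hs.alt_H, iN3, map_sub]
  simp only [hs.alt_H.sub1, hs.alt_psi.sub1, H_torsion hs]
  simp only [brN, hs.alt_H.sub1, hs.alt_H.add1]
  ring

end PqN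

open PqN in
/-- For a Poisson quasi-Nijenhuis structure with background
`(π, N, ψ, H)`: (a) `[·,·]_π` satisfies the Jacobi identity on `g*`; and
(b) `δ(ψ + i_N H) = 0`, where `δ` is the unique degree-one derivation of
`Λ•g*` vanishing on scalars with `δα = d_N α − H(πα,·,·)`.  On 3-forms this
derivation is given by the Chevalley–Eilenberg-type formula `dThree` of the
skew bracket `c(x,y) = [x,y]_N − π(H(x,y,·))`, which is the unique derivation
extending `δα = d_N α − H(πα,·,·)` (indeed `(δα)(x,y) = −α(c(x,y))`, using
the skew-symmetry of `π`). -/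
theorem pqn_gives_quasi_bialgebroid
    {g : Type*} [LieRing g] [LieAlgebra ℝ g] [FiniteDimensional ℝ g]
    (π : Module.Dual ℝ g →ₗ[ℝ] g) (N : g →ₗ[ℝ] g)
    (ψ H : g → g → g → ℝ)
    (hs : IsPQNwB π N ψ H) :
    (∀ α β γ : Module.Dual ℝ g,
      brPi π α (brPi π β γ) = brPi π (brPi π α β) γ + brPi π β (brPi π α γ)) ∧
    (∀ x y z w : g,
      dThree (fun a b => brN N a b - π (dual3 H hs.alt_H a b))
        (fun a b c => ψ a b c + iN3 N H a b c) x y z w = 0) := by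
  refine ⟨?_, ?_⟩
  · intro α β γ
    ext z
    have key := pi_brPi hs.skew hs.poisson
    simp only [brPi, adStar] at key ⊢
    simp only [key, LinearMap.add_apply, LinearMap.sub_apply, LinearMap.neg_apply,
      LinearMap.comp_apply, LieAlgebra.ad_apply, lie_lie, map_sub]
    ring
  · intro x y z w
    have h0 := hs.dN_psi x y z w
    have h1 := hs.closed_H (N x) (N y) z w
    have h2 := hs.closed_H (N x) y (N z) w
    have h3 := hs.closed_H (N x) y z (N w)
    have h4 := hs.closed_H x (N y) (N z) w
    have h5 := hs.closed_H x (N y) z (N w)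
    have h6 := hs.closed_H x y (N z) (N w)
    have p1 := pairingN hs.skew hs.compat hs.alt_H x y z w
    have p2 := pairingN hs.skew hs.compat hs.alt_H x z y w
    have p3 := pairingN hs.skew hs.compat hs.alt_H x w y z
    simp only [dThree, lie] at h0 h1 h2 h3 h4 h5 h6 ⊢
    simp only [term_eq hs]
    linear_combination h0 + h1 + h2 + h3 + h4 + h5 + h6 + p1 - p2 + p3
end

section
/- Let g be a finite-dimensional real Lie algebra, π a Poisson bivector on g, and ω a 2-form on g. Set N := π ∘ ω♭ and H := −dω. Then for all α, β ∈ g*: C_{π,N}(α,β) = 2 H(πα, πβ, ·) (an equality in g*). -/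
open PqN in
/-- For a Poisson bivector `π` and a 2-form `ω`, with
`N := π∘ω♭` and `H := −dω`: `C_{π,N}(α,β) = 2H(πα,πβ,·)` for all `α, β`. -/
theorem pair_concomitant_eq
    {g : Type*} [LieRing g] [LieAlgebra ℝ g] [FiniteDimensional ℝ g]
    (π : Module.Dual ℝ g →ₗ[ℝ] g)
    (hπ : ∀ α β : Module.Dual ℝ g, α (π β) = -β (π α))
    (hπP : ∀ α β γ : Module.Dual ℝ g,
      α ⁅π β, π γ⁆ + β ⁅π γ, π α⁆ + γ ⁅π α, π β⁆ = 0)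
    (ω : g →ₗ[ℝ] Module.Dual ℝ g) (hω : ∀ x y : g, ω x y = -ω y x)
    (N : g →ₗ[ℝ] g) (hN : N = π ∘ₗ ω) :
    ∀ (α β : Module.Dual ℝ g) (z : g),
      conc π N α β z = 2 * (-dTwo lie (fun a b => ω a b) (π α) (π β) z) := by
  intro α β z
  have key : ∀ (γ : Module.Dual ℝ g), N.dualMap γ = ω (π γ) := by
    intro γ
    ext x
    simp only [LinearMap.dualMap_apply, hN, LinearMap.comp_apply]
    rw [hπ, hω (π γ) x]
  have k2 : ∀ (γ : Module.Dual ℝ g) (x : g), γ (π (ω x)) = ω (π γ) x := by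
    intro γ x
    rw [hπ, hω (π γ) x]
  have hP := hπP α β (ω z)
  have e1 : β ⁅π (ω z), π α⁆ = -β ⁅π α, π (ω z)⁆ := by
    rw [← lie_skew, map_neg]
  have e2 := hω z ⁅π α, π β⁆
  have e3 := hω (π β) ⁅π α, z⁆
  have e4 := hω (π α) ⁅π β, z⁆
  simp only [conc, brNPi, brPi, brNmap, adStar, dTwo, PqN.lie, key]
  simp only [hN, LinearMap.add_apply, LinearMap.sub_apply, LinearMap.neg_apply,
    LinearMap.comp_apply, LieAlgebra.ad_apply, map_add, map_sub, map_neg, k2,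
    LinearMap.dualMap_apply]
  have k3 : ∀ (γ : Module.Dual ℝ g) (x y : g), ω (π (γ ∘ₗ (LieAlgebra.ad ℝ g x : g →ₗ[ℝ] g))) y
      = γ ⁅x, π (ω y)⁆ := by
    intro γ x y
    rw [← k2]; rfl
  simp only [k3]
  linarith
end

section
/- Let g be a finite-dimensional real Lie algebra, π a Poisson bivector on g, and ω a 2-form on g. Set N := π ∘ ω♭, ω_N(x,y) := ω(Nx,y), H := −dω, and ψ := dω_N. Then d_N ψ = d𝓗, i.e. the 4-form obtained by applying the Chevalley–Eilenberg-type operator of the deformed bracket [·,·]_N to ψ equals the Chevalley–Eilenberg differential of the 3-form 𝓗(x,y,z) = H(Nx,Ny,z) + H(Ny,Nz,x) + H(Nz,Nx,y). -/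
namespace PqN

lemma jac_aux {g : Type*} [LieRing g] [LieAlgebra ℝ g] (a b c : g) :
    ⁅⁅a, b⁆, c⁆ - ⁅⁅a, c⁆, b⁆ + ⁅⁅b, c⁆, a⁆ = 0 := by
  have h := lie_jacobi a b c
  rw [← lie_skew a ⁅b, c⁆, ← lie_skew b ⁅c, a⁆, ← lie_skew c ⁅a, b⁆, ← lie_skew c a, neg_lie] at h
  rw [← neg_eq_zero, ← h]
  abel

lemma dd_aux {g : Type*} [LieRing g] [LieAlgebra ℝ g]
    (τ : g →ₗ[ℝ] Module.Dual ℝ g) (hτ : ∀ x y : g, τ x y = -τ y x) (x y z w : g) :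
    dThree lie (dTwo lie (fun p q => τ p q)) x y z w = 0 := by
  have J : ∀ a b c d : g, τ ⁅⁅a, b⁆, c⁆ d - τ ⁅⁅a, c⁆, b⁆ d + τ ⁅⁅b, c⁆, a⁆ d = 0 := by
    intro a b c d
    have := congrArg (fun t => τ t d) (jac_aux a b c)
    simpa using this
  have j1 := J x y z w
  have j2 := J x y w z
  have j3 := J x z w y
  have j4 := J y z w x
  have s1 := hτ ⁅x, y⁆ ⁅z, w⁆
  have s2 := hτ ⁅x, z⁆ ⁅y, w⁆
  have s3 := hτ ⁅x, w⁆ ⁅y, z⁆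
  simp only [dThree, dTwo, lie]
  linarith

lemma dNd_aux {g : Type*} [LieRing g] [LieAlgebra ℝ g] (N : g →ₗ[ℝ] g)
    (τ : g →ₗ[ℝ] Module.Dual ℝ g) (hτ : ∀ x y : g, τ x y = -τ y x) (x y z w : g) :
    dThree (brN N) (dTwo lie (fun p q => τ p q)) x y z w
      = -dThree lie (dTwo (brN N) (fun p q => τ p q)) x y z w := by
  have J : ∀ a b c d : g, τ ⁅⁅a, b⁆, c⁆ d - τ ⁅⁅a, c⁆, b⁆ d + τ ⁅⁅b, c⁆, a⁆ d = 0 := by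
    intro a b c d
    have := congrArg (fun t => τ t d) (jac_aux a b c)
    simpa using this
  have K : ∀ a b c d : g,
      τ (N ⁅⁅a, b⁆, c⁆) d - τ (N ⁅⁅a, c⁆, b⁆) d + τ (N ⁅⁅b, c⁆, a⁆) d = 0 := by
    intro a b c d
    have := congrArg (fun t => τ (N t) d) (jac_aux a b c)
    simpa using this
  have T : ∀ a b c d : g, 
      (τ ⁅⁅N a, b⁆, c⁆ d - τ ⁅⁅N a, c⁆, b⁆ d + τ ⁅⁅b, c⁆, N a⁆ d)
      + (τ ⁅⁅a, N b⁆, c⁆ d - τ ⁅⁅a, c⁆, N b⁆ d + τ ⁅⁅N b, c⁆, a⁆ d)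
      + (τ ⁅⁅a, b⁆, N c⁆ d - τ ⁅⁅a, N c⁆, b⁆ d + τ ⁅⁅b, N c⁆, a⁆ d)
      - (τ (N ⁅⁅a, b⁆, c⁆) d - τ (N ⁅⁅a, c⁆, b⁆) d + τ (N ⁅⁅b, c⁆, a⁆) d) = 0 := by
    intro a b c d
    rw [J, J, J, K]; norm_num
  have t1 := T x y z w
  have t2 := T x y w z
  have t3 := T x z w y
  have t4 := T y z w x
  have s1 := hτ (brN N x y) ⁅z, w⁆
  have s2 := hτ (brN N x z) ⁅y, w⁆
  have s3 := hτ (brN N x w) ⁅y, z⁆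
  have s4 := hτ (brN N y z) ⁅x, w⁆
  have s5 := hτ (brN N y w) ⁅x, z⁆
  have s6 := hτ (brN N z w) ⁅x, y⁆
  simp only [brN, map_add, map_sub, LinearMap.add_apply, LinearMap.sub_apply] at s1 s2 s3 s4 s5 s6
  simp only [dThree, dTwo, lie, brN, map_add, map_sub, LinearMap.add_apply, LinearMap.sub_apply,
    add_lie, sub_lie]
  linarith

end PqN

open PqN in
/-- For a Poisson bivector `π` and a 2-form `ω`, with
`N := π∘ω♭`, `ω_N(x,y) := ω(Nx,y)`, `H := −dω`, `ψ := dω_N`: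
`d_N ψ = d𝓗`, where `𝓗(x,y,z) = H(Nx,Ny,z) + H(Ny,Nz,x) + H(Nz,Nx,y)`. -/
theorem pair_dN_psi_eq
    {g : Type*} [LieRing g] [LieAlgebra ℝ g] [FiniteDimensional ℝ g]
    (π : Module.Dual ℝ g →ₗ[ℝ] g)
    (hπ : ∀ α β : Module.Dual ℝ g, α (π β) = -β (π α))
    (hπP : ∀ α β γ : Module.Dual ℝ g,
      α ⁅π β, π γ⁆ + β ⁅π γ, π α⁆ + γ ⁅π α, π β⁆ = 0)
    (ω : g →ₗ[ℝ] Module.Dual ℝ g) (hω : ∀ x y : g, ω x y = -ω y x)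
    (N : g →ₗ[ℝ] g) (hN : N = π ∘ₗ ω) :
    ∀ x y z w : g,
      dThree (brN N) (fun a b c => dTwo lie (fun p q => ω (N p) q) a b c) x y z w
        = dThree lie
            (calH N (fun a b c => -dTwo lie (fun p q => ω p q) a b c)) x y z w := by
  have hNs : ∀ a b : g, ω (N a) b = ω a (N b) := by
    intro a b
    subst hN
    have h1 := hω (π (ω a)) b
    have h2 := hπ (ω b) (ω a)
    simp only [LinearMap.comp_apply]
    linarith
  have hP : ∀ a b c : g, ω ⁅N b, N c⁆ a + ω ⁅N c, N a⁆ b + ω ⁅N a, N b⁆ c = 0 := by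
    intro a b c
    have h := hπP (ω a) (ω b) (ω c)
    have h1 := hω ⁅N b, N c⁆ a
    have h2 := hω ⁅N c, N a⁆ b
    have h3 := hω ⁅N a, N b⁆ c
    subst hN
    simp only [LinearMap.comp_apply] at *
    linarith
  have h1 : ∀ a b : g, (ω ∘ₗ N) a b = -(ω ∘ₗ N) b a := by
    intro a b
    simp only [LinearMap.comp_apply]
    rw [hNs, hω]
  have h2 : ∀ a b : g, (ω ∘ₗ N ∘ₗ N) a b = -(ω ∘ₗ N ∘ₗ N) b a := by
    intro a b
    simp only [LinearMap.comp_apply]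
    rw [hNs, hNs, hω]
  have key : ∀ a b c : g, calH N (fun a b c => -dTwo lie (fun p q => ω p q) a b c) a b c
      = -dTwo (brN N) (fun p q => (ω ∘ₗ N) p q) a b c
        - dTwo lie (fun p q => (ω ∘ₗ N ∘ₗ N) p q) a b c := by
    intro a b c
    have p := hP a b c
    have e : ∀ u v : g, ω ⁅v, u⁆ = -ω ⁅u, v⁆ := by
      intro u v
      rw [← lie_skew, map_neg]
    have e' : ∀ u v : g, ω (N ⁅v, u⁆) = -ω (N ⁅u, v⁆) := by
      intro u v
      rw [← lie_skew, map_neg, map_neg]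
    simp only [calH, dTwo, lie, brN, LinearMap.comp_apply, map_add, map_sub,
      LinearMap.add_apply, LinearMap.sub_apply, ← hNs]
    rw [e (N a) (N c)] at p ⊢
    rw [e' b (N c), e' a (N b), e' a (N c)]
    simp only [LinearMap.neg_apply] at *
    linarith
  intro x y z w
  have A := dNd_aux N (ω ∘ₗ N) h1 x y z w
  have B := dd_aux (ω ∘ₗ N ∘ₗ N) h2 x y z w
  have C : dThree (brN N) (fun a b c => dTwo lie (fun p q => ω (N p) q) a b c) x y z w
      = dThree (brN N) (dTwo lie (fun p q => (ω ∘ₗ N) p q)) x y z w := rfl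
  rw [C, A]
  simp only [dThree, key] at B ⊢
  linarith
end

section
/- Let g be a finite-dimensional real Lie algebra, π a Poisson bivector on g, and ω a 2-form on g. Set N := π ∘ ω♭, ω_N(x,y) := ω(Nx,y), H := −dω, and 𝓗(x,y,z) := H(Nx,Ny,z) + H(Ny,Nz,x) + H(Nz,Nx,y). Then the following equality of 3-forms holds: 2( i_N(dω_N) + 𝓗 ) = d( i_N ω_N ), where for a 3-form η, (i_N η)(x,y,z) = η(Nx,y,z) + η(x,Ny,z) + η(x,y,Nz), and for a 2-form τ, (i_N τ)(x,y) = τ(Nx,y) + τ(x,Ny). -/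
open PqN in
/-- For a Poisson bivector `π` and a 2-form `ω`, with
`N := π∘ω♭`, `ω_N(x,y) := ω(Nx,y)`, `H := −dω`,
`𝓗(x,y,z) = H(Nx,Ny,z) + H(Ny,Nz,x) + H(Nz,Nx,y)`:
`2(i_N(dω_N) + 𝓗) = d(i_N ω_N)` as 3-forms. -/
theorem pair_iN_identity
    {g : Type*} [LieRing g] [LieAlgebra ℝ g] [FiniteDimensional ℝ g]
    (π : Module.Dual ℝ g →ₗ[ℝ] g)
    (hπ : ∀ α β : Module.Dual ℝ g, α (π β) = -β (π α))
    (hπP : ∀ α β γ : Module.Dual ℝ g,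
      α ⁅π β, π γ⁆ + β ⁅π γ, π α⁆ + γ ⁅π α, π β⁆ = 0)
    (ω : g →ₗ[ℝ] Module.Dual ℝ g) (hω : ∀ x y : g, ω x y = -ω y x)
    (N : g →ₗ[ℝ] g) (hN : N = π ∘ₗ ω) :
    ∀ x y z : g,
      2 * (iN3 N (fun a b c => dTwo lie (fun p q => ω (N p) q) a b c) x y z
            + calH N (fun a b c => -dTwo lie (fun p q => ω p q) a b c) x y z)
        = dTwo lie (iN2 N (fun a b => ω (N a) b)) x y z := by
  intro x y z
  have hs : ∀ p q : g, ω (N p) q = ω p (N q) := by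
    intro p q
    rw [hω (N p) q, hN]
    simp only [LinearMap.comp_apply]
    rw [hπ (ω q) (ω p), neg_neg]
  have hP := hπP (ω x) (ω y) (ω z)
  have hNa : ∀ p, π (ω p) = N p := by
    intro p
    rw [hN]
    rfl
  simp only [hNa] at hP
  have hsk : ∀ a b c : g, ω ⁅a, b⁆ c = -ω ⁅b, a⁆ c := by
    intro a b c
    rw [← lie_skew a b, map_neg, LinearMap.neg_apply]
  simp only [iN3, calH, iN2, dTwo, lie, hs]
  have e1 := hω x ⁅N y, N z⁆
  have e2 := hω y ⁅N z, N x⁆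
  have e3 := hω z ⁅N x, N y⁆
  linarith [hsk (N z) (N x) y, hsk (N z) x (N y), hsk z (N x) (N y), hsk (N y) x (N z),
    hsk (N x) y (N z), hsk (N z) y (N x), hsk z (N y) (N x), hsk y (N x) (N z),
    hsk (N y) z (N x), hsk (N x) z (N y)]
end

section
/- Let g be a finite-dimensional real Lie algebra, π a Poisson bivector on g, and ω a 2-form on g with dω = 0. Set N := π ∘ ω♭ and ω_N(x,y) := ω(Nx,y), and assume dω_N = 0. Then (π, N) is a Poisson–Nijenhuis structure on g: N ∘ π = π ∘ tN, the Nijenhuis torsion T_N vanishes identically, and the concomitant C_{π,N} vanishes identically. -/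
open PqN in
/-- (PΩ-structures give Poisson–Nijenhuis structures.)
If `π` is a Poisson bivector, `ω` a closed 2-form, `N := π∘ω♭`, and
`dω_N = 0`, then `(π, N)` is a Poisson–Nijenhuis structure:
`N∘π = π∘ᵗN`, `T_N ≡ 0` and `C_{π,N} ≡ 0`. -/
theorem POmega_gives_poisson_nijenhuis
    {g : Type*} [LieRing g] [LieAlgebra ℝ g] [FiniteDimensional ℝ g]
    (π : Module.Dual ℝ g →ₗ[ℝ] g)
    (hπ : ∀ α β : Module.Dual ℝ g, α (π β) = -β (π α))
    (hπP : ∀ α β γ : Module.Dual ℝ g,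
      α ⁅π β, π γ⁆ + β ⁅π γ, π α⁆ + γ ⁅π α, π β⁆ = 0)
    (ω : g →ₗ[ℝ] Module.Dual ℝ g) (hω : ∀ x y : g, ω x y = -ω y x)
    (hdω : ∀ x y z : g, dTwo lie (fun a b => ω a b) x y z = 0)
    (N : g →ₗ[ℝ] g) (hN : N = π ∘ₗ ω)
    (hdωN : ∀ x y z : g, dTwo lie (fun a b => ω (N a) b) x y z = 0) :
    N ∘ₗ π = π ∘ₗ N.dualMap ∧
    (∀ x y : g, torN N x y = 0) ∧
    (∀ α β : Module.Dual ℝ g, conc π N α β = 0) := by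
  have hNa : ∀ x, N x = π (ω x) := fun x => by rw [hN]; rfl
  have hωN : ∀ x y, ω (N x) y = ω x (N y) := by
    intro x y
    rw [hNa, hNa, hω, hπ, neg_neg]
  have htN : ∀ (α : Module.Dual ℝ g) (x : g), α (N x) = ω (π α) x := by
    intro α x
    rw [hNa, hπ, hω, neg_neg]
  have hdual : ∀ α : Module.Dual ℝ g, N.dualMap α = ω (π α) := by
    intro α
    ext x
    exact htN α x
  have hsk : ∀ (α : Module.Dual ℝ g) (x y : g), α ⁅x, y⁆ = -α ⁅y, x⁆ := by
    intro α x y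
    rw [← lie_skew, map_neg]
  refine ⟨?_, ?_, ?_⟩
  · ext α
    simp only [LinearMap.comp_apply, hdual, hNa]
  · intro x y
    rw [← Module.forall_dual_apply_eq_zero_iff ℝ]
    intro α
    have h1 := hdω (N x) y (π α)
    have h2 := hdω x (N y) (π α)
    have h3 := hdωN x y (π α)
    have h4 := hπP α (ω x) (ω y)
    simp only [dTwo, lie] at h1 h2 h3
    rw [← hNa, ← hNa] at h4
    simp only [torN, brN, map_sub, map_add]
    simp only [htN α]
    have e1 := hω (π α) ⁅N x, y⁆
    have e2 := hω (π α) ⁅x, N y⁆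
    have e3 := hω (π α) (N ⁅x, y⁆)
    have e4 := hω x ⁅N y, π α⁆
    have e5 := hω y ⁅π α, N x⁆
    have e6 : ω ⁅π α, N x⁆ y = -ω ⁅N x, π α⁆ y := by
      rw [← lie_skew, map_neg, LinearMap.neg_apply]
    have e7 := hωN ⁅y, π α⁆ x
    have e8 := hωN ⁅x, π α⁆ y
    linarith
  · intro α β
    ext z
    have h1 := hdω (π α) (π β) z
    have h4 := hπP α β (ω z)
    simp only [dTwo, lie] at h1
    rw [← hNa] at h4
    simp only [conc, brNPi, brPi, adStar, brNmap, hdual, LinearMap.add_apply,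
      LinearMap.sub_apply, LinearMap.neg_apply, LinearMap.comp_apply,
      LieAlgebra.ad_apply, map_add, map_sub, map_neg, LinearMap.zero_apply]
    simp only [← hNa, htN α ⁅_, _⁆, htN β ⁅_, _⁆]
    have e1 := hω (π α) ⁅π β, z⁆
    have e2 := hω (π β) ⁅π α, z⁆
    have e3 := hω z ⁅π α, π β⁆
    have e4 := hsk β (N z) (π α)
    have e5 : β ⁅π α, N z⁆ = ω (π (β ∘ₗ (LieAlgebra.ad ℝ g (π α) : g →ₗ[ℝ] g))) z :=
      htN (β ∘ₗ (LieAlgebra.ad ℝ g (π α) : g →ₗ[ℝ] g)) z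
    have e6 : α ⁅π β, N z⁆ = ω (π (α ∘ₗ (LieAlgebra.ad ℝ g (π β) : g →ₗ[ℝ] g))) z :=
      htN (α ∘ₗ (LieAlgebra.ad ℝ g (π β) : g →ₗ[ℝ] g)) z
    linarith
end

section
/- Let g be a finite-dimensional real Lie algebra and H a 3-form on g. Define on E := g ⊕ g* the bracket [(x,α),(y,β)]_H := ([x,y], ad*_x β − ad*_y α + H(x,y,·)) and the pairing ⟨(x,α),(y,β)⟩ := α(y) + β(x). Then: (a) [·,·]_H is alternating ([u,u]_H = 0 for all u ∈ E); (b) the pairing is invariant: ⟨[u,v]_H, w⟩ + ⟨v, [u,w]_H⟩ = 0 for all u,v,w ∈ E; and (c) [·,·]_H satisfies the Jacobi identity (so (E, [·,·]_H) is a Lie algebra) if and only if dH = 0. -/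
open PqN in
/-- On `E = g ⊕ g*` with the `H`-twisted Dorfman bracket
`[(x,α),(y,β)]_H = ([x,y], ad*_x β − ad*_y α + H(x,y,·))` and the canonical
pairing: (a) the bracket is alternating; (b) the pairing is invariant; and
(c) the bracket satisfies the Jacobi identity iff `dH = 0`. -/
theorem twisted_dorfman_courant_iff_closed
    {g : Type*} [LieRing g] [LieAlgebra ℝ g] [FiniteDimensional ℝ g]
    (H : g → g → g → ℝ) (hH : IsAlt3 H) :
    (∀ u : g × Module.Dual ℝ g, dorf H hH u u = 0) ∧
    (∀ u v w : g × Module.Dual ℝ g,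
      pr (dorf H hH u v) w + pr v (dorf H hH u w) = 0) ∧
    ((∀ u v w : g × Module.Dual ℝ g,
        dorf H hH u (dorf H hH v w)
          = dorf H hH (dorf H hH u v) w + dorf H hH v (dorf H hH u w)) ↔
      (∀ x y z w : g, dThree lie H x y z w = 0)) := by
  have cyc : ∀ a b c, H a b c = H c a b := fun a b c => by
    rw [hH.alt23 a b c, hH.alt12 a c b, neg_neg]
  have key : ∀ x y z t : g, dThree lie H x y z t =
      -H ⁅x, y⁆ z t - H y ⁅x, z⁆ t - H x y ⁅z, t⁆ + H x z ⁅y, t⁆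
        + H x ⁅y, z⁆ t - H y z ⁅x, t⁆ := by
    intro x y z t
    simp only [dThree, lie]
    rw [hH.alt12 y ⁅x, z⁆ t, hH.alt12 x ⁅y, z⁆ t, cyc x y, cyc x z, cyc y z]
    ring
  have hzero : ∀ x z, H x x z = 0 := fun x z => by
    have := hH.alt12 x x z
    linarith
  refine ⟨?_, ?_, ?_⟩
  · intro u
    ext t
    · simp [dorf]
    · simp [dorf, dual3, hzero]
  · intro u v w
    have h1 := hH.alt23 u.1 v.1 w.1
    have h2 : ⁅v.1, w.1⁆ = -⁅w.1, v.1⁆ := (lie_skew _ _).symm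
    have h3 : ⁅v.1, u.1⁆ = -⁅u.1, v.1⁆ := (lie_skew _ _).symm
    have h4 : ⁅w.1, u.1⁆ = -⁅u.1, w.1⁆ := (lie_skew _ _).symm
    simp only [pr, dorf, dual3, adStar, LinearMap.add_apply, LinearMap.sub_apply,
      LinearMap.neg_apply, LinearMap.comp_apply, IsLinearMap.mk'_apply, LieAlgebra.ad_apply,
      h2, h3, h4, map_neg]
    linarith
  · have jac : ∀ (u v w : g × Module.Dual ℝ g) (t : g),
        (dorf H hH u (dorf H hH v w)).2 t
          - (dorf H hH (dorf H hH u v) w + dorf H hH v (dorf H hH u w)).2 t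
          = dThree lie H u.1 v.1 w.1 t := by
      intro u v w t
      rw [key]
      simp only [dorf, dual3, adStar, Prod.snd_add, LinearMap.add_apply, LinearMap.sub_apply,
        LinearMap.neg_apply, LinearMap.comp_apply, IsLinearMap.mk'_apply, LieAlgebra.ad_apply,
        lie_lie, map_sub]
      ring
    constructor
    · intro h x y z t
      have := jac (x, 0) (y, 0) (z, 0) t
      rw [h, sub_self] at this
      exact this.symm
    · intro h u v w
      refine Prod.ext ?_ (LinearMap.ext fun t => ?_)
      · simp [dorf]
      · exact sub_eq_zero.mp ((jac u v w t).trans (h _ _ _ _))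
end
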